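/- arXiv:0910.1207 — 2 statements merged into one kernel-verified Lean document; each statement's English description precedes it below -/
import Mathlib

section
/- Let μ be a positive Radon measure in ℝⁿ such that μ(L) = 0 for every hyperplane L orthogonal to one of the coordinate axes. Then a locally μ-integrable function f belongs to BMO(μ) if and only if there exists M ≥ 0 such that ∫_{{x ∈ Q : |f(x) − f_Q| > λ}} |f − f_Q| dμ ≤ (λ + M) · μ({x ∈ Q : |f(x) − f_Q| > λ}) for all axis-parallel cubes Q with μ(Q) > 0 and all λ ≥ 0. -/
open MeasureTheory Set ENNReal

/-- The closed axis-parallel cube with corner `a` and side length `h`. -/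
def cube {n : ℕ} (a : Fin n → ℝ) (h : ℝ) : Set (Fin n → ℝ) :=
  {x | ∀ j, a j ≤ x j ∧ x j ≤ a j + h}

/-- The mean value `f_Q = ⨍_Q f dμ` of `f` over a set `Q`. -/
noncomputable def meanOn {X : Type*} [MeasurableSpace X] (μ : Measure X) (f : X → ℝ)
    (Q : Set X) : ℝ :=
  ⨍ y in Q, f y ∂μ


namespace BmoAux

/-- Dyadic index vector of `x` at level `k` relative to the cube with corner `a`, side `h`. -/
noncomputable def fl {n : ℕ} (a : Fin n → ℝ) (h : ℝ) (k : ℕ) (x : Fin n → ℝ) : Fin n → ℤ :=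
  fun c => ⌊(2:ℝ) ^ k * ((x c - a c) / h)⌋

/-- Normalised distance of `x c` from the anchor face. -/
noncomputable def wd {n : ℕ} (a : Fin n → ℝ) (h : ℝ) (i : ℕ × (Fin n → ℤ) × (Fin n → Bool))
    (x : Fin n → ℝ) (c : Fin n) : ℝ :=
  if i.2.2 c then (i.2.1 c : ℝ) + 1 - (2:ℝ) ^ i.1 * ((x c - a c) / h)
  else (2:ℝ) ^ i.1 * ((x c - a c) / h) - i.2.1 c

/-- index of the child -/
def child {n : ℕ} (i : ℕ × (Fin n → ℤ) × (Fin n → Bool)) : Fin n → ℤ :=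
  fun c => 2 * i.2.1 c + if i.2.2 c then 1 else 0

lemma floor_two (y : ℝ) : ⌊2 * y⌋ = 2 * ⌊y⌋ ∨ ⌊2 * y⌋ = 2 * ⌊y⌋ + 1 := by
  have h1 := Int.floor_le y
  have h2 := Int.lt_floor_add_one y
  have h3 : 2 * ⌊y⌋ ≤ ⌊2 * y⌋ := by rw [Int.le_floor]; push_cast; linarith
  have h4 : ⌊2 * y⌋ < 2 * ⌊y⌋ + 2 := by rw [Int.floor_lt]; push_cast; linarith
  omega

variable {n : ℕ} {a : Fin n → ℝ} {h : ℝ}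

lemma fl_succ (k : ℕ) (x : Fin n → ℝ) (c : Fin n) :
    fl a h (k+1) x c = 2 * fl a h k x c ∨ fl a h (k+1) x c = 2 * fl a h k x c + 1 := by
  have := floor_two ((2:ℝ) ^ k * ((x c - a c) / h))
  unfold fl
  rwa [pow_succ', mul_assoc]

lemma fl_nest {k l : ℕ} (hkl : k ≤ l) {x y : Fin n → ℝ} (hxy : fl a h l x = fl a h l y) :
    fl a h k x = fl a h k y := by
  induction l, hkl using Nat.le_induction with
  | base => exact hxy
  | succ l hl ih =>
    apply ih
    funext c
    have := congrFun hxy c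
    have h1 := fl_succ (a := a) (h := h) l x c
    have h2 := fl_succ (a := a) (h := h) l y c
    omega

lemma fl_child {i : ℕ × (Fin n → ℤ) × (Fin n → Bool)} {x : Fin n → ℝ}
    (hx : fl a h (i.1+1) x = child i) : fl a h i.1 x = i.2.1 := by
  funext c
  have := congrFun hx c
  have h1 := fl_succ (a := a) (h := h) i.1 x c
  unfold child at this
  split_ifs at this <;> omega

lemma measurable_fl (k : ℕ) : Measurable (fl a h k) := by
  unfold fl
  refine measurable_pi_lambda _ fun c => ?_
  refine Int.measurable_floor.comp ?_
  fun_prop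

lemma measurable_wd (i : ℕ × (Fin n → ℤ) × (Fin n → Bool)) (c : Fin n) :
    Measurable (fun x => wd a h i x c) := by
  unfold wd
  split_ifs <;> fun_prop

lemma measurableSet_cell (k : ℕ) (m : Fin n → ℤ) : MeasurableSet {y | fl a h k y = m} :=
  measurable_fl k (measurableSet_singleton m)

lemma wd_bounds {i : ℕ × (Fin n → ℤ) × (Fin n → Bool)} {x : Fin n → ℝ}
    (hx : fl a h i.1 x = i.2.1) (c : Fin n) : 0 ≤ wd a h i x c ∧ wd a h i x c ≤ 1 := by
  have h0 := congrFun hx c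
  unfold fl at h0
  rw [Int.floor_eq_iff] at h0
  unfold wd
  split_ifs <;> constructor <;> linarith

lemma wd_half {i : ℕ × (Fin n → ℤ) × (Fin n → Bool)} {x : Fin n → ℝ} (c : Fin n)
    (hx : fl a h (i.1+1) x c = child i c) : wd a h i x c ≤ 1/2 := by
  have h0 := hx
  unfold fl child at h0
  rw [Int.floor_eq_iff, pow_succ', mul_assoc] at h0
  unfold wd
  split_ifs at h0 ⊢ <;> push_cast at h0 <;> linarith [h0.1, h0.2]

lemma child_of_wd {i : ℕ × (Fin n → ℤ) × (Fin n → Bool)} {x : Fin n → ℝ} (c : Fin n)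
    (hx : fl a h i.1 x = i.2.1) (hw : wd a h i x c < 1/2) :
    fl a h (i.1+1) x c = child i c := by
  have h0 := congrFun hx c
  unfold fl at h0
  rw [Int.floor_eq_iff] at h0
  unfold fl child
  rw [Int.floor_eq_iff, pow_succ', mul_assoc]
  unfold wd at hw
  split_ifs at hw ⊢ <;> push_cast <;> constructor <;> linarith [h0.1, h0.2]

/-- Null level sets of `wd`. -/
lemma wd_null (hh : 0 < h) {μ : Measure (Fin n → ℝ)}
    (hplane : ∀ (j : Fin n) (t : ℝ), μ {x | x j = t} = 0)
    (i : ℕ × (Fin n → ℤ) × (Fin n → Bool)) (c : Fin n) (r : ℝ) :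
    μ {x | wd a h i x c = r} = 0 := by
  have h2 : (0:ℝ) < 2 ^ i.1 := by positivity
  by_cases hs : i.2.2 c
  · refine measure_mono_null ?_ (hplane c (a c + h * (i.2.1 c + 1 - r) / 2 ^ i.1))
    intro x hx
    simp only [wd, hs, if_true, mem_ofPred_eq] at hx ⊢
    field_simp at hx ⊢
    linarith
  · refine measure_mono_null ?_ (hplane c (a c + h * (i.2.1 c + r) / 2 ^ i.1))
    intro x hx
    simp only [wd, hs, mem_ofPred_eq, Bool.false_eq_true, if_false] at hx ⊢
    field_simp at hx ⊢
    linarith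

/-- Corner of the expanded cube. -/
noncomputable def corner (a : Fin n → ℝ) (h : ℝ) (i : ℕ × (Fin n → ℤ) × (Fin n → Bool)) (r : ℝ) :
    Fin n → ℝ :=
  fun c => a c + h * (i.2.1 c + if i.2.2 c then 1 - r else 0) / 2 ^ i.1

lemma cube_iff (hh : 0 < h) (i : ℕ × (Fin n → ℤ) × (Fin n → Bool)) (r : ℝ) (x : Fin n → ℝ) :
    x ∈ cube (corner a h i r) (h * r / 2 ^ i.1) ↔
      ∀ c, wd a h i x c ≤ r ∧ 0 ≤ wd a h i x c := by
  have h2 : (0:ℝ) < 2 ^ i.1 := by positivity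
  unfold cube corner
  simp only [mem_ofPred_eq]
  refine forall_congr' fun c => ?_
  have e : x c = a c + h * ((2:ℝ) ^ i.1 * ((x c - a c) / h)) / 2 ^ i.1 := by field_simp; ring
  unfold wd
  set u := (2:ℝ) ^ i.1 * ((x c - a c) / h)
  rw [e]
  have key : ∀ p q : ℝ, a c + h * p / 2 ^ i.1 ≤ a c + h * q / 2 ^ i.1 ↔ p ≤ q := by
    intro p q
    rw [add_le_add_iff_left, div_le_div_iff_of_pos_right h2, mul_le_mul_iff_right₀ hh]
  have e2 : ∀ p : ℝ, a c + h * p / 2 ^ i.1 + h * r / 2 ^ i.1 = a c + h * (p + r) / 2 ^ i.1 := by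
    intro p; ring
  rw [e2, key, key]
  split_ifs <;> constructor <;> rintro ⟨h1, h2⟩ <;> constructor <;> linarith

/-- Overlap combinatorics. -/
lemma overlap (rr : ℕ × (Fin n → ℤ) × (Fin n → Bool) → ℝ)
    (T : Set (ℕ × (Fin n → ℤ) × (Fin n → Bool)))
    (hr : ∀ i ∈ T, 1/2 ≤ rr i)
    (hT : ∀ i ∈ T, ∀ j ∈ T, i.1 < j.1 → ¬ ∀ y, fl a h (j.1+1) y = child j →
      ∀ c, wd a h i y c ≤ rr i)
    (x : Fin n → ℝ)
    (hx : ∀ i ∈ T, fl a h i.1 x = i.2.1 ∧ ∀ c, wd a h i x c ≤ rr i) :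
    ∃ φ : T → (Fin n → Bool) × Set (Fin n), Function.Injective φ := by
  classical
  let S : ℕ × (Fin n → ℤ) × (Fin n → Bool) → Set (Fin n) := fun i =>
    {c | ∃ j ∈ T, j.2.2 = i.2.2 ∧ i.1 < j.1 ∧ ∃ y, fl a h (j.1+1) y = child j ∧
      rr i < wd a h i y c}
  have main : ∀ i ∈ T, ∀ j ∈ T, i.2.2 = j.2.2 → i.1 < j.1 → S i ≠ S j := by
    intro i hi j hj hs hlt hS
    have := hT i hi j hj hlt
    push Not at this
    obtain ⟨y, hy, c, hc⟩ := this
    have hcS : c ∈ S j := by rw [← hS]; exact ⟨j, hj, hs.symm, hlt, y, hy, hc⟩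
    obtain ⟨l, hl, hls, hjl, z, hz, hzc⟩ := hcS
    have hxi := (hx i hi).2 c
    have hxj := (hx j hj).1
    have hxl := (hx l hl).1
    have h2 : (0:ℝ) < 2 ^ i.1 := by positivity
    have hxc : fl a h (j.1+1) x c = child j c := by
      have hyc := congrFun hy c
      have h3 := fl_succ (a := a) (h := h) j.1 x c
      rw [hxj] at h3
      have hlt2 := hxi.trans_lt hc
      unfold wd at hlt2
      rw [hs] at hlt2
      unfold child at hyc ⊢
      by_cases hb : j.2.2 c = true
      · simp only [hb, if_true] at hlt2 hyc ⊢
        have h4 : (2:ℝ) ^ i.1 * ((y c - a c) / h) < (2:ℝ) ^ i.1 * ((x c - a c) / h) := by linarith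
        have h5 : (y c - a c) / h ≤ (x c - a c) / h := (lt_of_mul_lt_mul_left h4 h2.le).le
        have h6 : fl a h (j.1+1) y c ≤ fl a h (j.1+1) x c := by
          unfold fl; gcongr
        omega
      · simp only [hb] at hlt2 hyc ⊢
        simp only [Bool.false_eq_true, if_false] at hlt2 hyc ⊢
        have h4 : (2:ℝ) ^ i.1 * ((x c - a c) / h) < (2:ℝ) ^ i.1 * ((y c - a c) / h) := by linarith
        have h5 : (x c - a c) / h ≤ (y c - a c) / h := (lt_of_mul_lt_mul_left h4 h2.le).le
        have h6 : fl a h (j.1+1) x c ≤ fl a h (j.1+1) y c := by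
          unfold fl; gcongr
        omega
    have hzl : fl a h l.1 z = fl a h l.1 x := by rw [fl_child hz, hxl]
    have hzx := fl_nest (a := a) (h := h) (k := j.1+1) hjl hzl
    have := wd_half (a := a) (h := h) (i := j) (x := z) c (by rw [hzx, hxc])
    linarith [hr j hj]
  refine ⟨fun i => (i.1.2.2, S i.1), ?_⟩
  rintro ⟨i, hi⟩ ⟨j, hj⟩ hij
  simp only [Prod.mk.injEq] at hij
  obtain ⟨h1, h2⟩ := hij
  rcases lt_trichotomy i.1 j.1 with hlt | heq | hgt
  · exact absurd h2 (main i hi j hj h1 hlt)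
  · have h3 : i.2.1 = j.2.1 := by rw [← (hx i hi).1, ← (hx j hj).1, heq]
    exact Subtype.ext (Prod.ext heq (Prod.ext h3 h1))
  · exact absurd h2.symm (main j hj i hi h1.symm hgt)

/-- Greedy selection. -/
def kept {ι : Type*} (k : ι → ℕ) (r : ι → ι → Prop) (i : ι) : Prop :=
  ∀ j, (_ : k j < k i) → kept k r j → ¬ r j i
termination_by k i

lemma exists_kept {ι : Type*} (k : ι → ℕ) (r : ι → ι → Prop) (S : Set ι) :
    ∃ T ⊆ S, (∀ i ∈ T, ∀ j ∈ T, k i < k j → ¬ r i j) ∧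
      ∀ i ∈ S, i ∈ T ∨ ∃ j ∈ T, r j i := by
  refine ⟨{i | i ∈ S ∧ kept k (fun j i => j ∈ S ∧ r j i) i}, fun i hi => hi.1, ?_, ?_⟩
  · rintro i ⟨hi, hi'⟩ j ⟨hj, hj'⟩ hlt hr
    rw [kept] at hj'
    exact hj' i hlt hi' ⟨hi, hr⟩
  · intro i hi
    by_cases hk : kept k (fun j i => j ∈ S ∧ r j i) i
    · exact Or.inl ⟨hi, hk⟩
    · right
      rw [kept] at hk
      push Not at hk
      obtain ⟨j, _, hj, hjS, hr⟩ := hk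
      exact ⟨j, ⟨hjS, hj⟩, hr⟩


/-- Dyadic density: a set whose density is at most one half in all dyadic cells is null. -/
lemma density (hh : 0 < h) {μ : Measure (Fin n → ℝ)} [μ.OuterRegular] (N : Set (Fin n → ℝ))
    (hfin : μ N ≠ ∞)
    (hN : ∀ x ∈ N, ∀ k, 2 * μ (N ∩ {y | fl a h k y = fl a h k x}) ≤ μ {y | fl a h k y = fl a h k x}) :
    μ N = 0 := by
  by_contra h0
  have hlt : μ N < 2 * μ N := by
    rw [two_mul]; exact ENNReal.lt_add_right hfin h0
  obtain ⟨U, hNU, hUo, hU⟩ := N.exists_isOpen_lt_of_lt _ hlt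
  -- small cells are inside U
  have hsmall : ∀ x ∈ N, ∃ k, {y | fl a h k y = fl a h k x} ⊆ U := by
    intro x hx
    obtain ⟨ε, hε, hb⟩ := Metric.isOpen_iff.1 hUo x (hNU hx)
    obtain ⟨k, hk⟩ := exists_pow_lt_of_lt_one (div_pos hε hh) (by norm_num : (1/2:ℝ) < 1)
    refine ⟨k, fun y hy => hb ?_⟩
    rw [Metric.mem_ball, dist_pi_lt_iff hε]
    intro c
    have hc := congrFun hy c
    unfold fl at hc
    have := Int.abs_sub_lt_one_of_floor_eq_floor hc
    rw [← mul_sub, ← sub_div, abs_mul, abs_div, abs_of_pos hh, abs_of_pos (by positivity : (0:ℝ) < 2^k)] at this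
    rw [Real.dist_eq]
    rw [one_div, inv_pow, lt_div_iff₀ hh] at hk
    have e : y c - a c - (x c - a c) = y c - x c := by ring
    rw [e] at this
    have h2 : (0:ℝ) < 2 ^ k := by positivity
    have : |y c - x c| < (2 ^ k)⁻¹ * h := by
      field_simp at this ⊢
      linarith
    linarith
  let J : Set (ℕ × (Fin n → ℤ)) := {q | {y | fl a h q.1 y = q.2} ⊆ U ∧ (∃ x ∈ N, fl a h q.1 x = q.2) ∧
    ∀ x, fl a h q.1 x = q.2 → ∀ k < q.1, ¬ {y | fl a h k y = fl a h k x} ⊆ U}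
  have hcov : N ⊆ ⋃ q ∈ J, N ∩ {y | fl a h q.1 y = q.2} := by
    classical
    intro x hx
    have hex := hsmall x hx
    refine mem_biUnion (x := (Nat.find hex, fl a h (Nat.find hex) x)) ?_ ⟨hx, rfl⟩
    refine ⟨Nat.find_spec hex, ⟨x, hx, rfl⟩, ?_⟩
    intro y hy k hk hsub
    refine Nat.find_min hex hk ?_
    have := fl_nest (a := a) (h := h) hk.le hy
    rwa [this] at hsub
  have hdisj : J.PairwiseDisjoint (fun q => {y | fl a h q.1 y = q.2}) := by
    rintro ⟨k, m⟩ hq ⟨k', m'⟩ hq' hne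
    refine Set.disjoint_left.2 fun y hy hy' => hne ?_
    simp only [mem_ofPred_eq] at hy hy'
    have : k = k' := by
      rcases lt_trichotomy k k' with hl | he | hl
      · exact absurd (by rw [hy]; exact hq.1) (hq'.2.2 y hy' k hl)
      · exact he
      · exact absurd (by rw [hy']; exact hq'.1) (hq.2.2 y hy k' hl)
    subst this
    rw [← hy, ← hy']
  have hJc : J.Countable := Set.to_countable J
  have : 2 * μ N ≤ μ U := by
    calc 2 * μ N ≤ 2 * ∑' q : J, μ (N ∩ {y | fl a h q.1.1 y = q.1.2}) := by
          gcongr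
          exact (measure_mono hcov).trans (measure_biUnion_le μ hJc _)
      _ = ∑' q : J, 2 * μ (N ∩ {y | fl a h q.1.1 y = q.1.2}) := by rw [ENNReal.tsum_mul_left]
      _ ≤ ∑' q : J, μ {y | fl a h q.1.1 y = q.1.2} := by
          refine ENNReal.tsum_le_tsum fun q => ?_
          obtain ⟨x, hx, he⟩ := q.2.2.1
          rw [← he]
          exact hN x hx _
      _ = μ (⋃ q ∈ J, {y | fl a h q.1 y = q.2}) := by
          rw [measure_biUnion hJc hdisj]
          intro q _
          exact measurableSet_cell _ _
      _ ≤ μ U := measure_mono (iUnion₂_subset fun q hq => hq.1)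
  exact absurd hU (not_lt.2 this)

lemma continuous_measure {μ : Measure (Fin n → ℝ)} (A : Set (Fin n → ℝ))
    (hfin : μ A ≠ ∞) (w : (Fin n → ℝ) → Fin n → ℝ) (hw : ∀ c, Measurable (fun x => w x c))
    (hnull : ∀ c r, μ {x | w x c = r} = 0) :
    Continuous (fun r : ℝ => μ.real (A ∩ {x | ∀ c, w x c ≤ r})) := by
  classical
  have : IsFiniteMeasure (μ.restrict A) := ⟨by simpa using hfin.lt_top⟩
  have hm : ∀ r : ℝ, MeasurableSet {x | ∀ c, w x c ≤ r} := by
    intro r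
    rw [ofPred_forall]
    exact MeasurableSet.iInter fun c => measurableSet_le (hw c) measurable_const
  have e : (fun r : ℝ => μ.real (A ∩ {x | ∀ c, w x c ≤ r})) =
      fun r => ∫ x, ({x | ∀ c, w x c ≤ r}.indicator (fun _ => (1:ℝ)) x) ∂(μ.restrict A) := by
    funext r
    rw [integral_indicator (hm r), setIntegral_const, smul_eq_mul, mul_one, measureReal_restrict_apply (hm r), inter_comm]
  rw [e, continuous_iff_continuousAt]
  intro r0
  refine continuousAt_of_dominated (bound := fun _ => 1) ?_ ?_ (integrable_const _) ?_
  · exact Filter.Eventually.of_forall fun r => (measurable_const.indicator (hm r)).aestronglyMeasurable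
  · refine Filter.Eventually.of_forall fun r => Filter.Eventually.of_forall fun x => ?_
    refine (norm_indicator_le_norm_self _ _).trans ?_
    simp
  · have h1 : ∀ᵐ x ∂(μ.restrict A), ∀ c, w x c ≠ r0 := by
      rw [ae_all_iff]
      intro c
      refine ae_restrict_of_ae ?_
      rw [ae_iff]
      simpa using hnull c r0
    filter_upwards [h1] with x hx
    by_cases hall : ∀ c, w x c < r0
    · have : ∀ᶠ r in nhds r0, ∀ c, w x c ≤ r := by
        rw [Filter.eventually_all]
        intro c
        filter_upwards [lt_mem_nhds (hall c)] with r hr using hr.le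
      refine (continuousAt_const (y := (1:ℝ))).congr ?_
      filter_upwards [this] with r hr
      rw [indicator_of_mem]; exact hr
    · push Not at hall
      obtain ⟨c, hc⟩ := hall
      have hc' : r0 < w x c := lt_of_le_of_ne hc (hx c).symm
      refine (continuousAt_const (y := (0:ℝ))).congr ?_
      filter_upwards [gt_mem_nhds hc'] with r hr
      rw [indicator_of_notMem]
      intro hmem
      exact absurd (hmem c) (not_le.2 hr)

/-- Selecting an intermediate cube on which `E` has density exactly one half. -/
lemma exists_radius (hh : 0 < h) {μ : Measure (Fin n → ℝ)}
    (hplane : ∀ (j : Fin n) (t : ℝ), μ {x | x j = t} = 0)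
    (E : Set (Fin n → ℝ)) (i : ℕ × (Fin n → ℤ) × (Fin n → Bool))
    (hfin : μ {y | fl a h i.1 y = i.2.1} ≠ ∞)
    (h1 : 2 * μ (E ∩ {y | fl a h i.1 y = i.2.1}) ≤ μ {y | fl a h i.1 y = i.2.1})
    (h2 : μ {y | fl a h (i.1+1) y = child i} < 2 * μ (E ∩ {y | fl a h (i.1+1) y = child i})) :
    ∃ r : ℝ, 1/2 ≤ r ∧ r ≤ 1 ∧
      2 * μ (E ∩ ({y | fl a h i.1 y = i.2.1} ∩ {x | ∀ c, wd a h i x c ≤ r})) =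
      μ ({y | fl a h i.1 y = i.2.1} ∩ {x | ∀ c, wd a h i x c ≤ r}) := by
  set P := {y | fl a h i.1 y = i.2.1} with hP
  set D := {y | fl a h (i.1+1) y = child i} with hD
  have hEP : μ (E ∩ P) ≠ ∞ := measure_ne_top_of_subset inter_subset_right hfin
  have hDP : D ⊆ P := fun y hy => fl_child hy
  have hDfin : μ D ≠ ∞ := measure_ne_top_of_subset hDP hfin
  have hEDfin : μ (E ∩ D) ≠ ∞ := measure_ne_top_of_subset inter_subset_right hDfin
  let Φ : ℝ → ℝ := fun r => 2 * μ.real ((E ∩ P) ∩ {x | ∀ c, wd a h i x c ≤ r}) -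
    μ.real (P ∩ {x | ∀ c, wd a h i x c ≤ r})
  have hcont : Continuous Φ :=
    ((continuous_measure _ hEP (wd a h i) (measurable_wd i) (wd_null hh hplane i)).const_mul 2).sub
      (continuous_measure _ hfin (wd a h i) (measurable_wd i) (wd_null hh hplane i))
  have hone : P ∩ {x | ∀ c, wd a h i x c ≤ 1} = P :=
    inter_eq_left.2 fun x hx c => (wd_bounds hx c).2
  have hΦ1 : Φ 1 ≤ 0 := by
    simp only [Φ]
    rw [inter_assoc, hone]
    have := ENNReal.toReal_mono hfin h1
    simp only [ENNReal.toReal_mul, ENNReal.toReal_ofNat] at this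
    simp only [Measure.real]; linarith
  have hDW : D ⊆ P ∩ {x | ∀ c, wd a h i x c ≤ 1/2} :=
    fun y hy => ⟨hDP hy, fun c => wd_half c (congrFun hy c)⟩
  have hnull : μ ((P ∩ {x | ∀ c, wd a h i x c ≤ 1/2}) \ D) = 0 := by
    refine measure_mono_null (t := ⋃ c, {x | wd a h i x c = 1/2}) ?_
      (measure_iUnion_null fun c => wd_null hh hplane i c _)
    rintro x ⟨⟨hxP, hx⟩, hxD⟩
    by_contra hcon
    simp only [mem_iUnion, mem_ofPred_eq, not_exists] at hcon
    exact hxD (funext fun c => child_of_wd c hxP (lt_of_le_of_ne (hx c) (hcon c)))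
  have hΦ2 : 0 ≤ Φ (1/2) := by
    simp only [Φ]
    have e1 : μ (P ∩ {x | ∀ c, wd a h i x c ≤ 1/2}) = μ D :=
      le_antisymm (by
        calc _ ≤ μ (D ∪ ((P ∩ {x | ∀ c, wd a h i x c ≤ 1/2}) \ D)) := measure_mono (by
                intro x hx; by_cases hxD : x ∈ D
                · exact Or.inl hxD
                · exact Or.inr ⟨hx, hxD⟩)
          _ ≤ μ D + 0 := by rw [← hnull]; exact measure_union_le _ _
          _ = μ D := add_zero _) (measure_mono hDW)
    have e2 : μ (E ∩ D) ≤ μ ((E ∩ P) ∩ {x | ∀ c, wd a h i x c ≤ 1/2}) := by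
      rw [inter_assoc]
      exact measure_mono (inter_subset_inter_right _ hDW)
    have e3 := ENNReal.toReal_mono (measure_ne_top_of_subset inter_subset_left hEP) e2
    have := ENNReal.toReal_mono (by finiteness) h2.le
    simp only [ENNReal.toReal_mul, ENNReal.toReal_ofNat] at this
    simp only [Measure.real]; rw [e1]; linarith
  obtain ⟨r, hr, hr0⟩ := intermediate_value_Icc' (by norm_num : (1/2:ℝ) ≤ 1) hcont.continuousOn ⟨hΦ1, hΦ2⟩
  refine ⟨r, hr.1, hr.2, ?_⟩
  simp only [Φ] at hr0
  rw [← inter_assoc]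
  rw [← ENNReal.toReal_eq_toReal_iff' (ENNReal.mul_ne_top (by simp) (measure_ne_top_of_subset inter_subset_left hEP)) (measure_ne_top_of_subset inter_subset_left hfin)]
  simp only [ENNReal.toReal_mul, ENNReal.toReal_ofNat]
  simp only [Measure.real] at hr0
  linarith


lemma cell_zero_subset (hh : 0 < h) : {y | fl a h 0 y = 0} ⊆ cube a h := by
  intro x hx c
  have h0 := congrFun hx c
  unfold fl at h0
  rw [Int.floor_eq_iff] at h0
  simp only [pow_zero, one_mul, Pi.zero_apply, Int.cast_zero, zero_add] at h0
  obtain ⟨h1, h2⟩ := h0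
  rw [div_lt_one hh] at h2
  have h3 : 0 ≤ x c - a c := by
    by_contra hc
    push Not at hc
    exact absurd h1 (not_le.2 (div_neg_of_neg_of_pos hc hh))
  constructor <;> linarith

lemma cell_zero_null (hh : 0 < h) {μ : Measure (Fin n → ℝ)}
    (hplane : ∀ (j : Fin n) (t : ℝ), μ {x | x j = t} = 0) :
    μ (cube a h \ {y | fl a h 0 y = 0}) = 0 := by
  refine measure_mono_null (t := ⋃ c, {x | x c = a c + h}) ?_
    (measure_iUnion_null fun c => hplane c _)
  rintro x ⟨hx, hx0⟩
  by_contra hcon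
  simp only [mem_iUnion, mem_ofPred_eq, not_exists] at hcon
  refine hx0 (funext fun c => ?_)
  unfold fl
  rw [Int.floor_eq_iff]
  simp only [pow_zero, one_mul, Pi.zero_apply, Int.cast_zero, zero_add]
  have h1 := (hx c).1
  have h2 := lt_of_le_of_ne (hx c).2 (hcon c)
  exact ⟨div_nonneg (by linarith) hh.le, (div_lt_one hh).2 (by linarith)⟩

/-- The closed expanded cube agrees up to a null set with its trace on the half-open cell. -/
lemma cube_null (hh : 0 < h) {μ : Measure (Fin n → ℝ)}
    (hplane : ∀ (j : Fin n) (t : ℝ), μ {x | x j = t} = 0)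
    (i : ℕ × (Fin n → ℤ) × (Fin n → Bool)) (r : ℝ) (hr : r ≤ 1) :
    μ (cube (corner a h i r) (h * r / 2 ^ i.1) \
      ({y | fl a h i.1 y = i.2.1} ∩ {x | ∀ c, wd a h i x c ≤ r})) = 0 := by
  refine measure_mono_null (t := (⋃ c, {x | wd a h i x c = 1}) ∪ ⋃ c, {x | wd a h i x c = 0}) ?_
    (measure_union_null (measure_iUnion_null fun c => wd_null hh hplane i c _)
      (measure_iUnion_null fun c => wd_null hh hplane i c _))
  rintro x ⟨hx, hx0⟩
  rw [cube_iff hh] at hx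
  by_contra hcon
  simp only [mem_union, mem_iUnion, mem_ofPred_eq, not_or, not_exists] at hcon
  obtain ⟨n1, n0⟩ := hcon
  refine hx0 ⟨funext fun c => ?_, fun c => (hx c).1⟩
  have h1 := lt_of_le_of_ne ((hx c).1.trans hr) (n1 c)
  have h2 := lt_of_le_of_ne (hx c).2 (Ne.symm (n0 c))
  unfold fl
  rw [Int.floor_eq_iff]
  unfold wd at h1 h2
  split_ifs at h1 h2 <;> constructor <;> linarith

/-- Covering lemma. -/
lemma covering (hh : 0 < h) {μ : Measure (Fin n → ℝ)} [μ.OuterRegular]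
    (hplane : ∀ (j : Fin n) (t : ℝ), μ {x | x j = t} = 0)
    (hfin : μ (cube a h) ≠ ∞)
    (E : Set (Fin n → ℝ))
    (hhalf : 2 * μ (E ∩ cube a h) ≤ μ (cube a h)) :
    ∃ (T : Set (ℕ × (Fin n → ℤ) × (Fin n → Bool)))
      (b : ℕ × (Fin n → ℤ) × (Fin n → Bool) → Fin n → ℝ)
      (s : ℕ × (Fin n → ℤ) × (Fin n → Bool) → ℝ),
      (∀ i ∈ T, 0 < s i ∧ μ (cube (b i) (s i) \ cube a h) = 0 ∧
        0 < μ (cube (b i) (s i)) ∧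
        2 * μ (E ∩ cube (b i) (s i)) = μ (cube (b i) (s i))) ∧
      μ ((E ∩ cube a h) \ ⋃ i ∈ T, cube (b i) (s i)) = 0 ∧
      ∑' i : T, μ (E ∩ cube (b i) (s i)) ≤
        (Fintype.card ((Fin n → Bool) × Set (Fin n)) : ℝ≥0∞) * μ (E ∩ cube a h) := by
  classical
  set Q0 : Set (Fin n → ℝ) := {y | fl a h 0 y = 0} with hQ0
  have hQ0Q : Q0 ⊆ cube a h := cell_zero_subset hh
  have hQ0null := cell_zero_null (a := a) hh hplane
  have hQ0fin : μ Q0 ≠ ∞ := measure_ne_top_of_subset hQ0Q hfin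
  have hQ0ae : Q0 =ᵐ[μ] cube a h :=
    (hQ0Q.eventuallyLE).antisymm (ae_le_set.2 hQ0null)
  have hEQ0 : μ (E ∩ Q0) = μ (E ∩ cube a h) :=
    measure_congr ((ae_eq_refl E).inter hQ0ae)
  let P : ℕ × (Fin n → ℤ) × (Fin n → Bool) → Set (Fin n → ℝ) := fun i => {y | fl a h i.1 y = i.2.1}
  let D : ℕ × (Fin n → ℤ) × (Fin n → Bool) → Set (Fin n → ℝ) :=
    fun i => {y | fl a h (i.1+1) y = child i}
  let S : Set (ℕ × (Fin n → ℤ) × (Fin n → Bool)) := {i | P i ⊆ Q0 ∧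
    2 * μ (E ∩ P i) ≤ μ (P i) ∧ μ (D i) < 2 * μ (E ∩ D i)}
  have hrad : ∀ i ∈ S, ∃ r : ℝ, 1/2 ≤ r ∧ r ≤ 1 ∧
      2 * μ (E ∩ (P i ∩ {x | ∀ c, wd a h i x c ≤ r})) = μ (P i ∩ {x | ∀ c, wd a h i x c ≤ r}) := by
    intro i hi
    obtain ⟨r, h1, h2, h3⟩ := exists_radius hh hplane E i (measure_ne_top_of_subset hi.1 hQ0fin) hi.2.1 hi.2.2
    exact ⟨r, h1, h2, h3⟩
  choose! rr hr1 hr2 hr3 using hrad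
  let W : ℕ × (Fin n → ℤ) × (Fin n → Bool) → Set (Fin n → ℝ) :=
    fun i => P i ∩ {x | ∀ c, wd a h i x c ≤ rr i}
  obtain ⟨T, hTS, hT1, hT2⟩ := exists_kept (fun i : ℕ × (Fin n → ℤ) × (Fin n → Bool) => i.1)
    (fun j i => D i ⊆ {x | ∀ c, wd a h j x c ≤ rr j} ∧ D i ⊆ P j) S
  let b : ℕ × (Fin n → ℤ) × (Fin n → Bool) → Fin n → ℝ := fun i => corner a h i (rr i)
  let s : ℕ × (Fin n → ℤ) × (Fin n → Bool) → ℝ := fun i => h * rr i / 2 ^ i.1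
  have hWR : ∀ i, W i ⊆ cube (b i) (s i) := by
    rintro i x ⟨hxP, hx⟩
    exact (cube_iff hh i (rr i) x).2 fun c => ⟨hx c, (wd_bounds hxP c).1⟩
  have hWae : ∀ i ∈ S, W i =ᵐ[μ] cube (b i) (s i) := fun i hi =>
    ((hWR i).eventuallyLE).antisymm (ae_le_set.2 (cube_null hh hplane i (rr i) (hr2 i hi)))
  have hDP : ∀ i, D i ⊆ P i := fun i y hy => fl_child hy
  have hDW : ∀ i ∈ S, D i ⊆ W i := fun i hi y hy => ⟨hDP i hy, fun c =>
    (wd_half c (congrFun hy c)).trans (hr1 i hi)⟩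
  have hWm : ∀ i, MeasurableSet (W i) := by
    intro i
    refine (measurableSet_cell _ _).inter ?_
    rw [ofPred_forall]
    exact MeasurableSet.iInter fun c => measurableSet_le (measurable_wd i c) measurable_const
  refine ⟨T, b, s, ?_, ?_, ?_⟩
  · intro i hiT
    have hi := hTS hiT
    have hrpos : 0 < rr i := by linarith [hr1 i hi]
    refine ⟨by positivity, ?_, ?_, ?_⟩
    · refine measure_mono_null ?_ (cube_null (a := a) hh hplane i (rr i) (hr2 i hi))
      rintro x ⟨hx, hxQ⟩
      exact ⟨hx, fun hxW => hxQ (hQ0Q (hi.1 hxW.1))⟩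
    · have : 0 < μ (E ∩ D i) := by
        rw [pos_iff_ne_zero]
        intro h0
        have := hi.2.2
        rw [h0] at this
        simp at this
      exact this.trans_le (measure_mono (inter_subset_right.trans ((hDW i hi).trans (hWR i))))
    · rw [← measure_congr (hWae i hi), ← measure_congr ((ae_eq_refl E).inter (hWae i hi))]
      exact hr3 i hi
  · -- the covering property
    let N : Set (Fin n → ℝ) := {x | x ∈ E ∩ Q0 ∧ ∀ k, 2 * μ (E ∩ {y | fl a h k y = fl a h k x}) ≤
      μ {y | fl a h k y = fl a h k x}}
    have hN0 : μ N = 0 := by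
      refine density (a := a) hh N (measure_ne_top_of_subset (fun x hx => hx.1.2) hQ0fin) ?_
      intro x hx k
      refine le_trans ?_ (hx.2 k)
      gcongr
      exact fun x hx => hx.1.1
    refine measure_mono_null (t := (cube a h \ Q0) ∪ N) ?_ (measure_union_null hQ0null hN0)
    rintro x ⟨⟨hxE, hxQ⟩, hxU⟩
    by_contra hcon
    simp only [mem_union, not_or] at hcon
    have hx0 : x ∈ Q0 := by
      by_contra hx0; exact hcon.1 ⟨hxQ, hx0⟩
    have hex : ∃ k, μ {y | fl a h k y = fl a h k x} < 2 * μ (E ∩ {y | fl a h k y = fl a h k x}) := by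
      by_contra hno
      push Not at hno
      exact hcon.2 ⟨⟨hxE, hx0⟩, hno⟩
    have hne : Nat.find hex ≠ 0 := by
      intro h0
      have := Nat.find_spec hex
      rw [h0] at this
      have e : {y | fl a h 0 y = fl a h 0 x} = Q0 := by rw [show fl a h 0 x = 0 from hx0]
      rw [e, hEQ0, measure_congr hQ0ae] at this
      exact absurd hhalf (not_le.2 this)
    obtain ⟨k, hk⟩ := Nat.exists_eq_succ_of_ne_zero hne
    have hk1 := Nat.find_spec hex
    have hk0 := Nat.find_min hex (m := k) (by omega)
    rw [hk] at hk1
    rw [not_lt] at hk0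
    let i : ℕ × (Fin n → ℤ) × (Fin n → Bool) :=
      (k, fl a h k x, fun c => decide (fl a h (k+1) x c = 2 * fl a h k x c + 1))
    have hci : child i = fl a h (k+1) x := by
      funext c
      have := fl_succ (a := a) (h := h) k x c
      simp only [child, i, decide_eq_true_eq]
      split_ifs <;> omega
    have hDi : D i = {y | fl a h (k+1) y = fl a h (k+1) x} := by
      simp only [D]; rw [hci]
    have hiS : i ∈ S := by
      refine ⟨?_, hk0, ?_⟩
      · intro y hy
        have := fl_nest (a := a) (h := h) (Nat.zero_le k) (show fl a h k y = fl a h k x from hy)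
        exact this.trans hx0
      · rw [hDi]; exact hk1
    have hxD : x ∈ D i := by rw [hDi]; rfl
    apply hxU
    rcases hT2 i hiS with hi | ⟨j, hj, hji⟩
    · exact mem_biUnion hi (hWR i (hDW i hiS hxD))
    · exact mem_biUnion hj (hWR j ⟨hji.2 hxD, hji.1 hxD⟩)
  · -- bounded overlap
    have hTc : Countable T := inferInstance
    have hcount : ∀ x, ∑' i : T, (W i).indicator (fun _ => (1:ℝ≥0∞)) x ≤
        (Fintype.card ((Fin n → Bool) × Set (Fin n)) : ℝ≥0∞) := by
      intro x
      let Tx : Set (ℕ × (Fin n → ℤ) × (Fin n → Bool)) := {i | i ∈ T ∧ x ∈ W i}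
      obtain ⟨φ, hφ⟩ := overlap (a := a) (h := h) rr Tx (fun i hi => hr1 i (hTS hi.1))
        (by
          intro i hi j hj hlt hall
          refine hT1 i hi.1 j hj.1 hlt ⟨fun y hy => hall y hy, fun y hy => ?_⟩
          have h1 : fl a h j.1 y = fl a h j.1 x := (hDP j hy).trans (show fl a h j.1 x = j.2.1 from hj.2.1).symm
          exact (fl_nest hlt.le h1).trans hi.2.1) x (fun i hi => hi.2)
      have : Finite Tx := Finite.of_injective φ hφ
      have : Fintype Tx := Fintype.ofFinite _
      rw [ENNReal.tsum_eq_iSup_sum]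
      refine iSup_le fun F => ?_
      have hle : (F.filter fun i : T => x ∈ W i).card ≤ Fintype.card ((Fin n → Bool) × Set (Fin n)) := by
        refine Finset.card_le_card_of_injOn
          (t := (Finset.univ : Finset ((Fin n → Bool) × Set (Fin n))))
          (fun i => if hi : x ∈ W i then φ ⟨i.1, i.2, hi⟩ else (fun _ => false, ∅)) (fun _ _ => Finset.mem_univ _) ?_
        intro i hi j hj hij
        have hi' := (Finset.mem_filter.1 hi).2
        have hj' := (Finset.mem_filter.1 hj).2
        simp only [hi', hj', dif_pos] at hij
        have := hφ hij
        simp only [Subtype.mk.injEq] at this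
        exact Subtype.ext this
      calc ∑ i ∈ F, (W i).indicator (fun _ => (1:ℝ≥0∞)) x
          = ((F.filter fun i : T => x ∈ W i).card : ℝ≥0∞) := by
            rw [Finset.card_filter]
            push_cast
            refine Finset.sum_congr rfl fun i _ => ?_
            simp only [indicator_apply]
        _ ≤ _ := by exact_mod_cast hle
    calc ∑' i : T, μ (E ∩ cube (b i) (s i)) = ∑' i : T, μ.restrict (E ∩ Q0) (W i) := by
          refine tsum_congr fun i => ?_
          rw [Measure.restrict_apply (hWm i), ← measure_congr ((ae_eq_refl E).inter (hWae i (hTS i.2)))]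
          congr 1
          ext x
          constructor
          · rintro ⟨h1, h2⟩
            exact ⟨h2, h1, (hTS i.2).1 h2.1⟩
          · rintro ⟨h1, h2, _⟩
            exact ⟨h2, h1⟩
      _ = ∑' i : T, ∫⁻ x, (W i).indicator (fun _ => (1:ℝ≥0∞)) x ∂(μ.restrict (E ∩ Q0)) := by
          refine tsum_congr fun i => ?_
          exact (lintegral_indicator_one (hWm i)).symm
      _ = ∫⁻ x, ∑' i : T, (W i).indicator (fun _ => (1:ℝ≥0∞)) x ∂(μ.restrict (E ∩ Q0)) := by
          rw [lintegral_tsum]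
          intro i
          exact (measurable_const.indicator (hWm i)).aemeasurable
      _ ≤ ∫⁻ _, (Fintype.card ((Fin n → Bool) × Set (Fin n)) : ℝ≥0∞) ∂(μ.restrict (E ∩ Q0)) :=
          lintegral_mono hcount
      _ = _ := by rw [lintegral_const, Measure.restrict_apply_univ, hEQ0]


lemma split_lintegral {X : Type*} [MeasurableSpace X] {ν : Measure X} {E : Set X}
    (hE : NullMeasurableSet E ν) (F : X → ℝ≥0∞) :
    ∫⁻ x, F x ∂ν = ∫⁻ x in E, F x ∂ν + ∫⁻ x in Eᶜ, F x ∂ν := by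
  rw [← lintegral_add_measure]
  congr 1
  have := Measure.restrict_union₀ (μ := ν) (s := E) (t := Eᶜ)
    (disjoint_compl_right.aedisjoint) hE.compl
  rw [union_compl_self, Measure.restrict_univ] at this
  exact this

lemma level_null {X : Type*} [MeasurableSpace X] {ν : Measure X} {f : X → ℝ}
    (hf : AEStronglyMeasurable f ν) (c l : ℝ) : NullMeasurableSet {y | l < |f y - c|} ν := by
  have : AEMeasurable (fun y => |f y - c|) ν := by
    simpa [Real.norm_eq_abs] using (hf.aemeasurable.sub_const c).norm
  exact nullMeasurableSet_lt aemeasurable_const this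

/-- Median estimate. -/
lemma median_est {X : Type*} [MeasurableSpace X] {μ : Measure X} {f : X → ℝ} {R : Set X}
    (hfin : μ R ≠ ∞) (hf : AEStronglyMeasurable f (μ.restrict R))
    (c l m : ℝ) (hhalf : 2 * μ ({y | l < |f y - c|} ∩ R) = μ R) :
    ∫⁻ y in {y | l < |f y - c|} ∩ R, ENNReal.ofReal (|f y - c| - l) ∂μ ≤
      ∫⁻ y in R, ENNReal.ofReal |f y - m| ∂μ := by
  set E := {y | l < |f y - c|} with hEdef
  set ν := μ.restrict R with hν
  have hE : NullMeasurableSet E ν := level_null hf c l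
  have hνE : ν E = μ (E ∩ R) := Measure.restrict_apply₀ hE
  have hνfin : ν univ ≠ ∞ := by rw [Measure.restrict_apply_univ]; exact hfin
  have hνu : ν univ = 2 * ν E := by rw [hνE, hhalf, Measure.restrict_apply_univ]
  have hEfin : ν E ≠ ∞ := measure_ne_top_of_subset (subset_univ _) hνfin
  have hcompl : ν Eᶜ = ν E := by
    have := measure_add_measure_compl₀ hE
    rw [hνu, two_mul] at this
    exact (ENNReal.add_right_inj hEfin).1 this
  rw [← Measure.restrict_restrict₀ hE, split_lintegral hE (fun y => ENNReal.ofReal |f y - m|)]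
  set d := |m - c| with hd
  have tri : ∀ y, |f y - c| ≤ |f y - m| + d ∧ d ≤ |f y - m| + |f y - c| := by
    intro y
    constructor
    · exact abs_sub_le _ _ _
    · have := abs_sub_le m (f y) c
      rwa [abs_sub_comm m (f y)] at this
  calc ∫⁻ y in E, ENNReal.ofReal (|f y - c| - l) ∂ν
      ≤ ∫⁻ y in E, (ENNReal.ofReal |f y - m| + ENNReal.ofReal (d - l)) ∂ν := by
        refine lintegral_mono fun y => ?_
        refine le_trans (ENNReal.ofReal_le_ofReal ?_) ENNReal.ofReal_add_le
        linarith [(tri y).1]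
    _ = ∫⁻ y in E, ENNReal.ofReal |f y - m| ∂ν + ENNReal.ofReal (d - l) * ν Eᶜ := by
        rw [lintegral_add_right _ measurable_const, setLIntegral_const, hcompl]
    _ ≤ _ := by
        gcongr
        rw [← setLIntegral_const]
        refine lintegral_mono_ae ?_
        filter_upwards [ae_restrict_mem₀ hE.compl] with y hy
        refine ENNReal.ofReal_le_ofReal ?_
        have : |f y - c| ≤ l := not_lt.1 hy
        linarith [(tri y).2]

lemma avg_iff {X : Type*} [MeasurableSpace X] {μ : Measure X} {g : X → ℝ} {R : Set X}
    (hfin : μ R ≠ ∞) (hpos : 0 < μ R) (hg : IntegrableOn g R μ) (hg0 : ∀ y, 0 ≤ g y) {K : ℝ}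
    (hK : 0 ≤ K) :
    (⨍ y in R, g y ∂μ) ≤ K ↔ ∫⁻ y in R, ENNReal.ofReal (g y) ∂μ ≤ ENNReal.ofReal K * μ R := by
  have hp : 0 < μ.real R := ENNReal.toReal_pos hpos.ne' hfin
  rw [setAverage_eq, smul_eq_mul, inv_mul_le_iff₀ hp,
    ← ofReal_integral_eq_lintegral_ofReal hg (Filter.Eventually.of_forall hg0),
    ← ENNReal.ofReal_toReal hfin, ← ENNReal.ofReal_mul hK,
    ENNReal.ofReal_le_ofReal_iff (by positivity), mul_comm]
  rfl

end BmoAux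

/-- for a Radon measure `μ` on `ℝⁿ` giving no mass to hyperplanes orthogonal
to the coordinate axes, a locally `μ`-integrable `f` is in `BMO(μ)` iff there is `M ≥ 0`
with `∫_{{x ∈ Q : |f - f_Q| > λ}} |f - f_Q| dμ ≤ (λ + M) μ({x ∈ Q : |f - f_Q| > λ})` for
all axis-parallel cubes `Q` of positive measure and all `λ ≥ 0`. -/
theorem stmt18 (n : ℕ) (μ : Measure (Fin n → ℝ)) [μ.Regular] [IsLocallyFiniteMeasure μ]
    (hplane : ∀ (j : Fin n) (t : ℝ), μ {x | x j = t} = 0)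
    (f : (Fin n → ℝ) → ℝ)
    (hf : ∀ (a : Fin n → ℝ) (h : ℝ), 0 < h → IntegrableOn f (cube a h) μ) :
    (∃ K : ℝ, ∀ (a : Fin n → ℝ) (h : ℝ), 0 < h → 0 < μ (cube a h) →
      (⨍ y in cube a h, |f y - meanOn μ f (cube a h)| ∂μ) ≤ K) ↔
    (∃ M : ℝ, 0 ≤ M ∧ ∀ (a : Fin n → ℝ) (h : ℝ), 0 < h → 0 < μ (cube a h) → ∀ l : ℝ, 0 ≤ l →
      ∫⁻ y in {y | y ∈ cube a h ∧ l < |f y - meanOn μ f (cube a h)|},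
          ENNReal.ofReal |f y - meanOn μ f (cube a h)| ∂μ ≤
        ENNReal.ofReal (l + M) *
          μ {y | y ∈ cube a h ∧ l < |f y - meanOn μ f (cube a h)|}) := by
  have hfin : ∀ (a : Fin n → ℝ) (h : ℝ), μ (cube a h) ≠ ∞ := by
    intro a h
    have e : cube a h = Icc a (fun c => a c + h) := by
      ext x
      exact ⟨fun hx => ⟨fun c => (hx c).1, fun c => (hx c).2⟩, fun hx c => ⟨hx.1 c, hx.2 c⟩⟩
    rw [e]
    exact isCompact_Icc.measure_lt_top.ne
  have hset : ∀ (a : Fin n → ℝ) (h l c : ℝ), {y | y ∈ cube a h ∧ l < |f y - c|} =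
      {y | l < |f y - c|} ∩ cube a h := by
    intro a h l c
    ext y
    exact and_comm
  have hint : ∀ (a : Fin n → ℝ) (h c : ℝ), 0 < h →
      IntegrableOn (fun y => |f y - c|) (cube a h) μ := by
    intro a h c hh
    exact ((hf a h hh).sub (integrableOn_const (hfin a h))).abs
  constructor
  · rintro ⟨K0, hK0⟩
    set K := max K0 0 with hKdef
    have hKnn : 0 ≤ K := le_max_right _ _
    have hK : ∀ (a : Fin n → ℝ) (h : ℝ), 0 < h → 0 < μ (cube a h) →
        ∫⁻ y in cube a h, ENNReal.ofReal |f y - meanOn μ f (cube a h)| ∂μ ≤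
          ENNReal.ofReal K * μ (cube a h) := by
      intro a h hh hpos
      exact (BmoAux.avg_iff (hfin a h) hpos (hint a h _ hh) (fun y => abs_nonneg _) hKnn).1
        ((hK0 a h hh hpos).trans (le_max_left _ _))
    set C : ℕ := Fintype.card ((Fin n → Bool) × Set (Fin n)) with hC
    have hC1 : 1 ≤ C := Fintype.card_pos
    have hMe : ENNReal.ofReal (2 * K * C) = ENNReal.ofReal K * 2 * C := by
      rw [ENNReal.ofReal_mul (by positivity), mul_comm 2 K, ENNReal.ofReal_mul hKnn,
        ENNReal.ofReal_natCast, ENNReal.ofReal_ofNat]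
    refine ⟨2 * K * C, by positivity, ?_⟩
    intro a h hh hpos l hl
    set c := meanOn μ f (cube a h) with hc
    rw [hset]
    set E := {y | l < |f y - c|} with hE
    have key : ∫⁻ y in E ∩ cube a h, ENNReal.ofReal (|f y - c| - l) ∂μ ≤
        ENNReal.ofReal K * 2 * C * μ (E ∩ cube a h) := by
      rcases le_total (μ (cube a h)) (2 * μ (E ∩ cube a h)) with hbig | hsmall
      · calc ∫⁻ y in E ∩ cube a h, ENNReal.ofReal (|f y - c| - l) ∂μ
            ≤ ∫⁻ y in cube a h, ENNReal.ofReal |f y - c| ∂μ := by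
              refine (lintegral_mono_set inter_subset_right).trans (lintegral_mono fun y => ?_)
              exact ENNReal.ofReal_le_ofReal (by linarith)
          _ ≤ ENNReal.ofReal K * μ (cube a h) := hK a h hh hpos
          _ ≤ ENNReal.ofReal K * (2 * μ (E ∩ cube a h)) := by gcongr
          _ = ENNReal.ofReal K * 2 * (1:ℕ) * μ (E ∩ cube a h) := by
              rw [Nat.cast_one, mul_one, mul_assoc]
          _ ≤ _ := by gcongr
      · obtain ⟨T, b, s, hT, hcov, hsum⟩ := BmoAux.covering hh hplane (hfin a h) E hsmall
        have hTc : Countable T := inferInstance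
        calc ∫⁻ y in E ∩ cube a h, ENNReal.ofReal (|f y - c| - l) ∂μ
            ≤ ∫⁻ y in ⋃ i : T, E ∩ cube (b i) (s i), ENNReal.ofReal (|f y - c| - l) ∂μ := by
              refine lintegral_mono_set' (ae_le_set.2 (measure_mono_null ?_ hcov))
              rintro x ⟨hx, hxn⟩
              refine ⟨hx, fun hxU => hxn ?_⟩
              obtain ⟨i, hi, hxi⟩ := mem_iUnion₂.1 hxU
              exact mem_iUnion.2 ⟨⟨i, hi⟩, hx.1, hxi⟩
          _ ≤ ∑' i : T, ∫⁻ y in E ∩ cube (b i) (s i), ENNReal.ofReal (|f y - c| - l) ∂μ :=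
              lintegral_iUnion_le _ _
          _ ≤ ∑' i : T, ENNReal.ofReal K * 2 * μ (E ∩ cube (b i) (s i)) := by
              refine ENNReal.tsum_le_tsum fun i => ?_
              obtain ⟨h1, h2, h3, h4⟩ := hT i i.2
              refine (BmoAux.median_est (hfin _ _) (hf _ _ h1).1 c l
                (meanOn μ f (cube (b i) (s i))) h4).trans ((hK _ _ h1 h3).trans ?_)
              rw [← h4, mul_assoc]
          _ = ENNReal.ofReal K * 2 * ∑' i : T, μ (E ∩ cube (b i) (s i)) := ENNReal.tsum_mul_left
          _ ≤ ENNReal.ofReal K * 2 * (C * μ (E ∩ cube a h)) := by gcongr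
          _ = _ := by ring
    calc ∫⁻ y in E ∩ cube a h, ENNReal.ofReal |f y - c| ∂μ
        ≤ ∫⁻ y in E ∩ cube a h, (ENNReal.ofReal (|f y - c| - l) + ENNReal.ofReal l) ∂μ := by
          refine lintegral_mono fun y => ?_
          refine le_trans (ENNReal.ofReal_le_ofReal ?_) ENNReal.ofReal_add_le
          linarith
      _ = ∫⁻ y in E ∩ cube a h, ENNReal.ofReal (|f y - c| - l) ∂μ +
            ENNReal.ofReal l * μ (E ∩ cube a h) := by
          rw [lintegral_add_right _ measurable_const, setLIntegral_const]
      _ ≤ ENNReal.ofReal K * 2 * C * μ (E ∩ cube a h) + ENNReal.ofReal l * μ (E ∩ cube a h) := by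
          gcongr
      _ = _ := by
          rw [ENNReal.ofReal_add hl (by positivity), hMe]; ring
  · rintro ⟨M, hM0, hM⟩
    refine ⟨M, fun a h hh hpos => ?_⟩
    rw [BmoAux.avg_iff (hfin a h) hpos (hint a h _ hh) (fun y => abs_nonneg _) hM0]
    have h0 := hM a h hh hpos 0 le_rfl
    rw [hset, zero_add] at h0
    set c := meanOn μ f (cube a h) with hc
    have hE := BmoAux.level_null (hf a h hh).1 c 0
    rw [BmoAux.split_lintegral hE, Measure.restrict_restrict₀ hE]
    have hz : ∫⁻ y in {y | 0 < |f y - c|}ᶜ, ENNReal.ofReal |f y - c| ∂(μ.restrict (cube a h)) = 0 := by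
      rw [← nonpos_iff_eq_zero, ← lintegral_zero (μ := (μ.restrict (cube a h)).restrict {y | 0 < |f y - c|}ᶜ)]
      refine lintegral_mono_ae ?_
      filter_upwards [ae_restrict_mem₀ hE.compl] with y hy
      exact (ENNReal.ofReal_eq_zero.2 (not_lt.1 hy)).le
    rw [hz, add_zero]
    refine h0.trans ?_
    gcongr
    exact inter_subset_right
end

section
/- Let μ be a positive Radon measure in ℝⁿ such that μ(L) = 0 for every hyperplane L orthogonal to one of the coordinate axes. If f ∈ BMO(μ) and there exists α ≥ 0 such that d_{f,μ}(λ) = μ({x ∈ ℝⁿ : |f(x)| > λ}) is finite for all λ > α, then f belongs to weak L^∞(μ); in particular there exists M ≥ 0 such that ∫_{{x : |f(x)| > λ}} |f| dμ ≤ (λ + M)·d_{f,μ}(λ) for all λ > α. -/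
open MeasureTheory Set ENNReal

/-- The distribution function `d_{f,μ}(λ) = μ {x : λ < |f x|}`. -/
noncomputable def distrib {X : Type*} [MeasurableSpace X] (μ : Measure X) (f : X → ℝ)
    (l : ℝ) : ℝ≥0∞ :=
  μ {x | l < |f x|}

/-- The decreasing rearrangement `f*(t) = inf {λ : d_{f,μ}(λ) ≤ t}` (with `inf ∅ = ∞`). -/
noncomputable def rearr {X : Type*} [MeasurableSpace X] (μ : Measure X) (f : X → ℝ)
    (t : ℝ) : ℝ≥0∞ :=
  sInf {l : ℝ≥0∞ | μ {x | l < ENNReal.ofReal |f x|} ≤ ENNReal.ofReal t}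

/-- The maximal function `f**(t) = (1/t) ∫₀ᵗ f*(s) ds`. -/
noncomputable def maxfn {X : Type*} [MeasurableSpace X] (μ : Measure X) (f : X → ℝ)
    (t : ℝ) : ℝ≥0∞ :=
  (∫⁻ s in Set.Ioc (0 : ℝ) t, rearr μ f s) / ENNReal.ofReal t

section Helpers

open Filter Topology Metric

lemma closedBall_eq_cube {n : ℕ} (x : Fin n → ℝ) {r : ℝ} (hr : 0 < r) :
    closedBall x r = cube (fun j => x j - r) (2 * r) := by
  ext y
  simp only [mem_closedBall, dist_pi_le_iff hr.le, cube, mem_ofPred_eq, Real.dist_eq, abs_le]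
  refine forall_congr' fun j => ?_
  constructor <;> rintro ⟨h1, h2⟩ <;> constructor <;> linarith

lemma osc_ball {n : ℕ} (μ : Measure (Fin n → ℝ)) [IsLocallyFiniteMeasure μ]
    (f : (Fin n → ℝ) → ℝ)
    (hloc : ∀ (a : Fin n → ℝ) (h : ℝ), 0 < h → IntegrableOn f (cube a h) μ)
    (K : ℝ)
    (hBMO : ∀ (a : Fin n → ℝ) (h : ℝ), 0 < h → 0 < μ (cube a h) →
      (⨍ y in cube a h, |f y - meanOn μ f (cube a h)| ∂μ) ≤ K)
    (x : Fin n → ℝ) {r : ℝ} (hr : 0 < r) :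
    ∃ c : ℝ, ∫⁻ y in closedBall x r, ENNReal.ofReal |f y - c| ∂μ ≤
      ENNReal.ofReal K * μ (closedBall x r) := by
  have hfin : μ (closedBall x r) ≠ ⊤ := (isCompact_closedBall x r).measure_ne_top
  have h1 := hloc (fun j => x j - r) (2 * r) (by linarith)
  have h2 := hBMO (fun j => x j - r) (2 * r) (by linarith)
  rw [← closedBall_eq_cube x hr] at h1 h2
  refine ⟨meanOn μ f (closedBall x r), ?_⟩
  set c := meanOn μ f (closedBall x r)
  rcases eq_or_ne (μ (closedBall x r)) 0 with h0 | h0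
  · rw [Measure.restrict_eq_zero.2 h0]; simp
  have h3 := h2 (pos_iff_ne_zero.2 h0)
  have hintg : Integrable (fun y => |f y - c|) (μ.restrict (closedBall x r)) := by
    have : IsFiniteMeasure (μ.restrict (closedBall x r)) :=
      ⟨by simpa using hfin.lt_top⟩
    exact (Integrable.sub h1 (integrable_const c)).abs
  rw [← ofReal_integral_eq_lintegral_ofReal hintg (ae_of_all _ fun y => abs_nonneg _)]
  rw [setAverage_eq, smul_eq_mul] at h3
  have hpos : 0 < μ.real (closedBall x r) := ENNReal.toReal_pos h0 hfin
  have h4 : ∫ y in closedBall x r, |f y - c| ∂μ ≤ K * μ.real (closedBall x r) := by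
    rw [inv_mul_le_iff₀ hpos] at h3
    linarith
  have hK : 0 ≤ K := by
    have : 0 ≤ ∫ y in closedBall x r, |f y - c| ∂μ := integral_nonneg fun y => abs_nonneg _
    by_contra hK
    have := mul_neg_of_neg_of_pos (not_le.1 hK) hpos
    linarith
  calc _ ≤ ENNReal.ofReal (K * μ.real (closedBall x r)) := ENNReal.ofReal_le_ofReal h4
    _ = _ := by rw [ENNReal.ofReal_mul hK, ofReal_measureReal hfin]

/-- the local estimate on a half-filled set -/
lemma local_est {X : Type*} [MeasurableSpace X] (μ : Measure X) (f : X → ℝ) (hf : Measurable f)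
    (Q : Set X) (l c : ℝ)
    (hhalf : μ (Q ∩ {x | l < |f x|}) ≤ μ (Q \ {x | l < |f x|})) :
    ∫⁻ y in Q ∩ {x | l < |f x|}, ENNReal.ofReal (|f y| - l) ∂μ ≤
      ∫⁻ y in Q, ENNReal.ofReal |f y - c| ∂μ := by
  set E := {x | l < |f x|} with hE
  have hEm : MeasurableSet E := measurableSet_lt measurable_const hf.abs
  have hg : Measurable fun y => ENNReal.ofReal |f y - c| := by fun_prop
  rw [← lintegral_inter_add_sdiff _ Q hEm]
  calc ∫⁻ y in Q ∩ E, ENNReal.ofReal (|f y| - l) ∂μ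
      ≤ ∫⁻ y in Q ∩ E, (ENNReal.ofReal |f y - c| + ENNReal.ofReal (|c| - l)) ∂μ := by
        refine lintegral_mono fun y => ?_
        have h1 : |f y| - |c| ≤ |f y - c| := abs_sub_abs_le_abs_sub _ _
        rcases le_total 0 (|c| - l) with h | h
        · rw [← ENNReal.ofReal_add (abs_nonneg _) h]
          exact ENNReal.ofReal_le_ofReal (by linarith)
        · exact le_add_right (ENNReal.ofReal_le_ofReal (by linarith))
    _ = ∫⁻ y in Q ∩ E, ENNReal.ofReal |f y - c| ∂μ + ENNReal.ofReal (|c| - l) * μ (Q ∩ E) := by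
        rw [lintegral_add_left hg]; simp
    _ ≤ ∫⁻ y in Q ∩ E, ENNReal.ofReal |f y - c| ∂μ + ENNReal.ofReal (|c| - l) * μ (Q \ E) := by
        gcongr
    _ ≤ _ := by
        gcongr
        rw [← setLIntegral_const]
        refine setLIntegral_mono hg fun y hy => ENNReal.ofReal_le_ofReal ?_
        have h2 : |f y| ≤ l := not_lt.1 hy.2
        have h1 : |c| - |f y| ≤ |c - f y| := abs_sub_abs_le_abs_sub _ _
        rw [abs_sub_comm] at h1
        linarith

lemma sphere_null {n : ℕ} (μ : Measure (Fin n → ℝ))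
    (hplane : ∀ (j : Fin n) (t : ℝ), μ {x | x j = t} = 0) (x : Fin n → ℝ) {r : ℝ} (hr : 0 < r) :
    μ {y | dist y x = r} = 0 := by
  have : {y | dist y x = r} ⊆ ⋃ j : Fin n, ({y | y j = x j + r} ∪ {y | y j = x j - r}) := by
    intro y hy
    by_contra hcon
    simp only [mem_iUnion, mem_union, mem_ofPred_eq, not_exists, not_or] at hcon hy
    have h1 : ∀ j, dist (y j) (x j) < r := by
      intro j
      refine lt_of_le_of_ne (hy ▸ dist_le_pi_dist y x j) fun h => ?_
      rw [Real.dist_eq] at h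
      rcases (abs_eq hr.le).1 h with h | h
      · exact (hcon j).1 (by linarith)
      · exact (hcon j).2 (by linarith)
    have := (dist_pi_lt_iff hr).2 h1
    linarith
  refine measure_mono_null this (measure_iUnion_null fun j => measure_union_null ?_ ?_)
  · exact hplane j _
  · exact hplane j _

lemma ball_cont {n : ℕ} (μ : Measure (Fin n → ℝ)) [IsLocallyFiniteMeasure μ]
    (hplane : ∀ (j : Fin n) (t : ℝ), μ {x | x j = t} = 0) (x : Fin n → ℝ) {r : ℝ} (hr : 0 < r) :
    ContinuousAt (fun r => μ.real (closedBall x r)) r := by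
  have hfin : ∀ r, μ (closedBall x r) ≠ ⊤ := fun r => (isCompact_closedBall x r).measure_ne_top
  refine (ENNReal.tendsto_toReal (hfin r)).comp ?_
  refine tendsto_measure_of_ae_tendsto_indicator (𝓝 r) measurableSet_closedBall
    (fun _ => measurableSet_closedBall) (B := closedBall x (r + 1)) measurableSet_closedBall
    (hfin _) ?_ ?_
  · filter_upwards [eventually_lt_nhds (lt_add_one r)] with s hs
    exact closedBall_subset_closedBall hs.le
  · have h : ∀ᵐ y ∂μ, dist y x ≠ r := by
      rw [ae_iff]; simpa using sphere_null μ hplane x hr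
    filter_upwards [h] with y hy
    rcases lt_or_gt_of_ne hy with h | h
    · filter_upwards [eventually_gt_nhds h] with s hs
      simp [mem_closedBall, hs.le, h.le]
    · filter_upwards [eventually_lt_nhds h] with s hs
      simp [mem_closedBall, not_le.2 hs, not_le.2 h]

/-- existence of half-filled cubes -/
lemma half_ball {n : ℕ} (μ : Measure (Fin n → ℝ)) [IsLocallyFiniteMeasure μ]
    (hplane : ∀ (j : Fin n) (t : ℝ), μ {x | x j = t} = 0) (E : Set (Fin n → ℝ))
    (x : Fin n → ℝ)
    (hx : Tendsto (fun r => μ (E ∩ closedBall x r) / μ (closedBall x r)) (𝓝[>] 0) (𝓝 1))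
    {R : ℝ} (hR0 : 0 < R) (hR : 2 * μ E ≤ μ (closedBall x R)) :
    ∃ r, 0 < r ∧ r ≤ R ∧ μ (closedBall x r) = 2 * μ (closedBall x r ∩ E) := by
  have hfin : ∀ r, μ (closedBall x r) ≠ ⊤ := fun r => (isCompact_closedBall x r).measure_ne_top
  have hfin' : ∀ r, μ (closedBall x r ∩ E) ≠ ⊤ := fun r =>
    measure_ne_top_of_subset inter_subset_left (hfin r)
  have h1 : ∀ᶠ r in 𝓝[>] (0:ℝ), (2:ℝ≥0∞)⁻¹ < μ (E ∩ closedBall x r) / μ (closedBall x r) :=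
    hx.eventually_const_lt (by simp)
  have h2 : ∀ᶠ r in 𝓝[>] (0:ℝ), r ∈ Ioo 0 R := Ioo_mem_nhdsGT hR0
  obtain ⟨s, hs, hs0, hsR⟩ := (h1.and h2).exists
  have hs' : μ (closedBall x s) ≤ 2 * μ (closedBall x s ∩ E) := by
    rw [inter_comm E] at hs
    have := ENNReal.mul_le_of_le_div hs.le
    calc μ (closedBall x s) = 2 * (2⁻¹ * μ (closedBall x s)) := by
          rw [← mul_assoc, ENNReal.mul_inv_cancel (by simp) (by simp), one_mul]
      _ ≤ _ := by gcongr
  let ν := μ.restrict E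
  have hν : ∀ r, ν.real (closedBall x r) = (μ (closedBall x r ∩ E)).toReal := fun r => by
    simp [ν, Measure.real, Measure.restrict_apply measurableSet_closedBall]
  have hcont : ContinuousOn (fun r => 2 * ν.real (closedBall x r) - μ.real (closedBall x r))
      (Icc s R) := by
    intro r hr
    have hr0 := hs0.trans_le hr.1
    refine ContinuousAt.continuousWithinAt ?_
    refine ContinuousAt.sub (continuousAt_const.mul (ball_cont ν ?_ x hr0)) (ball_cont μ hplane x hr0)
    intro j t
    exact le_antisymm ((Measure.restrict_apply_le _ _).trans_eq (hplane j t)) bot_le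
  have := intermediate_value_Icc' hsR.le hcont
  obtain ⟨r, hr, hr2⟩ := this (show (0:ℝ) ∈ _ from by
    simp only [hν]
    constructor
    · rw [sub_nonpos]
      have h3 : 2 * μ (closedBall x R ∩ E) ≤ μ (closedBall x R) := by
        refine le_trans ?_ hR
        gcongr
        exact inter_subset_right
      have := ENNReal.toReal_mono (hfin R) h3
      simpa [Measure.real] using this
    · rw [sub_nonneg]
      have := ENNReal.toReal_mono (ENNReal.mul_ne_top (by simp) (hfin' s)) hs'
      simpa [Measure.real] using this)
  refine ⟨r, hs0.trans_le hr.1, hr.2, ?_⟩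
  simp only [hν] at hr2
  rw [← ENNReal.toReal_eq_toReal_iff' (hfin r) (ENNReal.mul_ne_top (by simp) (hfin' r))]
  simp only [ENNReal.toReal_mul, ENNReal.toReal_ofNat]
  simp only [Measure.real] at hr2
  linarith

lemma exists_big_ball {n : ℕ} (μ : Measure (Fin n → ℝ)) {a : ℝ≥0∞} (ha : a < μ univ) :
    ∃ m : ℕ, a < μ (closedBall 0 (m : ℝ)) := by
  have h : Tendsto (fun m : ℕ => μ (closedBall (0 : Fin n → ℝ) (m : ℝ))) atTop
      (𝓝 (μ (⋃ m : ℕ, closedBall (0 : Fin n → ℝ) (m : ℝ)))) := by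
    refine tendsto_measure_iUnion_atTop fun i j hij => closedBall_subset_closedBall ?_
    exact_mod_cast hij
  rw [iUnion_closedBall_nat] at h
  exact (h.eventually_const_lt ha).exists

lemma lintegral_le_of_balls {n : ℕ} (μ : Measure (Fin n → ℝ)) (g : (Fin n → ℝ) → ℝ≥0∞)
    (E : Set (Fin n → ℝ)) (B : ℝ≥0∞) (k0 : ℕ)
    (h : ∀ k : ℕ, k0 ≤ k → ∫⁻ x in E ∩ closedBall 0 (k : ℝ), g x ∂μ ≤ B) :
    ∫⁻ x in E, g x ∂μ ≤ B := by
  have hE : E = ⋃ k : ℕ, E ∩ closedBall (0 : Fin n → ℝ) (k : ℝ) := by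
    rw [← inter_iUnion, iUnion_closedBall_nat, inter_univ]
  have hmono : Monotone fun k : ℕ => E ∩ closedBall (0 : Fin n → ℝ) (k : ℝ) := fun i j hij =>
    inter_subset_inter_right _ (closedBall_subset_closedBall (by exact_mod_cast hij))
  rw [hE, setLIntegral_iUnion_of_directed _ hmono.directed_le]
  refine iSup_le fun k => ?_
  exact (lintegral_mono_set (hmono (le_max_left k k0))).trans (h _ (le_max_right _ _))

lemma big_case {n : ℕ} (μ : Measure (Fin n → ℝ)) [IsLocallyFiniteMeasure μ]
    (hplane : ∀ (j : Fin n) (t : ℝ), μ {x | x j = t} = 0)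
    (f : (Fin n → ℝ) → ℝ) (hf : Measurable f) (K : ℝ)
    (hosc : ∀ (x : Fin n → ℝ) (r : ℝ), 0 < r → 
      ∃ c : ℝ, ∫⁻ y in closedBall x r, ENNReal.ofReal |f y - c| ∂μ ≤
        ENNReal.ofReal K * μ (closedBall x r)) :
    ∃ C : ℝ≥0∞, C ≠ ⊤ ∧ ∀ l : ℝ, 2 * μ {x | l < |f x|} < μ univ →
      ∫⁻ x in {x | l < |f x|}, ENNReal.ofReal (|f x| - l) ∂μ ≤ C * μ {x | l < |f x|} := by
  obtain ⟨N, τ, hτ, hN⟩ := HasBesicovitchCovering.no_satelliteConfig (α := Fin n → ℝ)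
  refine ⟨N * (ENNReal.ofReal K * 2), by finiteness, fun l hl => ?_⟩
  set E := {x | l < |f x|} with hE
  have hEm : MeasurableSet E := measurableSet_lt measurable_const hf.abs
  obtain ⟨m, hm⟩ := exists_big_ball μ hl
  refine lintegral_le_of_balls μ _ E _ 0 fun k _ => ?_
  let A : Set (Fin n → ℝ) := {x | x ∈ E ∩ closedBall 0 (k : ℝ) ∧ 
    Tendsto (fun r => μ (E ∩ closedBall x r) / μ (closedBall x r)) (𝓝[>] 0) (𝓝 1)}
  have hA : (E ∩ closedBall 0 (k : ℝ) : Set (Fin n → ℝ)) ≤ᵐ[μ] A := by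
    filter_upwards [Besicovitch.ae_tendsto_measure_inter_div_of_measurableSet μ hEm] with x hx hxE
    refine ⟨hxE, ?_⟩
    have : E.indicator (1 : (Fin n → ℝ) → ℝ≥0∞) x = 1 := by simp [hxE.1]
    rwa [this] at hx
  let R : ℝ := m + k + 1
  have hR : ∀ x : A, ∃ r, 0 < r ∧ r ≤ R ∧ 
      μ (closedBall (x : Fin n → ℝ) r) = 2 * μ (closedBall (x : Fin n → ℝ) r ∩ E) := by
    rintro ⟨x, hx, hx2⟩
    refine half_ball μ hplane E x hx2 (by positivity) (hm.le.trans (measure_mono ?_))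
    refine closedBall_subset_closedBall' ?_
    have : dist x 0 ≤ k := hx.2
    rw [dist_comm] at this
    simp only [R]; linarith
  choose r hr0 hrR hr using hR
  let q : Besicovitch.BallPackage A (Fin n → ℝ) := ⟨fun x => x, r, hr0, R, hrR⟩
  obtain ⟨s, hs1, hs2⟩ := Besicovitch.exist_disjoint_covering_families hτ hN q
  have hsc : ∀ i, (s i).Countable := fun i => by
    refine (hs1 i).countable_of_nonempty_interior fun x _ => ?_
    exact (nonempty_ball.2 (hr0 x)).mono ball_subset_interior_closedBall
  let Q : A → Set (Fin n → ℝ) := fun x => closedBall (x : Fin n → ℝ) (r x)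
  have hsub : A ⊆ ⋃ i, ⋃ j : s i, Q j ∩ E := by
    intro x hx
    have := hs2 (show x ∈ range q.c from ⟨⟨x, hx⟩, rfl⟩)
    simp only [mem_iUnion] at this ⊢
    obtain ⟨i, j, hj, hxj⟩ := this
    exact ⟨i, ⟨j, hj⟩, ball_subset_closedBall hxj, hx.1.1⟩
  have hloc : ∀ x : A, ∫⁻ y in Q x ∩ E, ENNReal.ofReal (|f y| - l) ∂μ ≤
      ENNReal.ofReal K * 2 * μ (Q x ∩ E) := by
    intro x
    obtain ⟨c, hc⟩ := hosc x (r x) (hr0 x)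
    have hfin : μ (Q x) ≠ ⊤ := (isCompact_closedBall _ _).measure_ne_top
    refine (local_est μ f hf (Q x) l c ?_).trans (hc.trans_eq ?_)
    · have h1 := measure_inter_add_sdiff (μ := μ) (Q x) hEm
      have h2 : μ (Q x) = 2 * μ (Q x ∩ E) := hr x
      rw [h2, two_mul] at h1
      refine ((ENNReal.add_right_inj ?_).1 h1).ge
      exact measure_ne_top_of_subset inter_subset_left hfin
    · rw [hr x, mul_assoc]
  calc ∫⁻ x in E ∩ closedBall 0 (k : ℝ), ENNReal.ofReal (|f x| - l) ∂μ
      ≤ ∫⁻ x in A, ENNReal.ofReal (|f x| - l) ∂μ := lintegral_mono_set' hA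
    _ ≤ ∫⁻ x in ⋃ i, ⋃ j : s i, Q j ∩ E, ENNReal.ofReal (|f x| - l) ∂μ := lintegral_mono_set hsub
    _ ≤ ∑' i, ∫⁻ x in ⋃ j : s i, Q j ∩ E, ENNReal.ofReal (|f x| - l) ∂μ := lintegral_iUnion_le _ _
    _ ≤ ∑' i : Fin N, ENNReal.ofReal K * 2 * μ E := by
        refine ENNReal.tsum_le_tsum fun i => ?_
        have : Countable (s i) := (hsc i).to_subtype
        calc _ ≤ ∑' j : s i, ∫⁻ x in Q j ∩ E, ENNReal.ofReal (|f x| - l) ∂μ :=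
              lintegral_iUnion_le _ _
          _ ≤ ∑' j : s i, ENNReal.ofReal K * 2 * μ (Q j ∩ E) :=
              ENNReal.tsum_le_tsum fun j => hloc j
          _ = ENNReal.ofReal K * 2 * ∑' j : s i, μ (Q j ∩ E) := ENNReal.tsum_mul_left
          _ = ENNReal.ofReal K * 2 * μ (⋃ j : s i, Q j ∩ E) := by
              rw [measure_iUnion]
              · intro a b hab
                have := hs1 i a.2 b.2 (fun h => hab (Subtype.ext h))
                exact this.mono inter_subset_left inter_subset_left
              · intro j
                exact measurableSet_closedBall.inter hEm
          _ ≤ _ := by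
              gcongr
              exact iUnion_subset fun j => inter_subset_right
    _ = _ := by simp [mul_assoc]

lemma fin_case {n : ℕ} (μ : Measure (Fin n → ℝ)) [IsLocallyFiniteMeasure μ]
    (f : (Fin n → ℝ) → ℝ) (hf : Measurable f)
    (hloc : ∀ (r : ℝ), 0 < r → IntegrableOn f (closedBall 0 r) μ) (K : ℝ)
    (hosc : ∀ (x : Fin n → ℝ) (r : ℝ), 0 < r → 
      ∃ c : ℝ, ∫⁻ y in closedBall x r, ENNReal.ofReal |f y - c| ∂μ ≤
        ENNReal.ofReal K * μ (closedBall x r)) (hfin : μ univ ≠ ⊤) :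
    ∫⁻ x, ENNReal.ofReal |f x| ∂μ ≠ ⊤ := by
  rcases eq_or_ne (μ univ) 0 with h0 | h0
  · rw [Measure.measure_univ_eq_zero.1 h0]; simp
  obtain ⟨m, hm⟩ := exists_big_ball μ (pos_iff_ne_zero.2 h0)
  set I0 := ∫⁻ x in closedBall 0 (m : ℝ), ENNReal.ofReal |f x| ∂μ with hI0
  have hI0fin : I0 ≠ ⊤ := by
    have h1 : I0 ≤ ∫⁻ x in closedBall 0 (m + 1 : ℝ), ENNReal.ofReal |f x| ∂μ :=
      lintegral_mono_set (closedBall_subset_closedBall (by linarith))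
    have h2 := (hloc (m + 1) (by positivity)).abs.lintegral_lt_top
    exact (h1.trans_lt h2).ne
  set m0 := μ (closedBall 0 (m : ℝ))
  set T := μ univ
  let D : ℝ≥0∞ := (I0 + ENNReal.ofReal K * T) / m0
  have hD : D ≠ ⊤ := ENNReal.div_ne_top (by finiteness) hm.ne'
  have key : ∫⁻ x in univ, ENNReal.ofReal |f x| ∂μ ≤ ENNReal.ofReal K * T + D * T := by
    refine lintegral_le_of_balls μ _ univ _ (m + 1) fun k hk => ?_
    rw [univ_inter]
    have hk' : (m : ℝ) + 1 ≤ k := by exact_mod_cast hk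
    have hk0 : (0 : ℝ) < k := by have : (0 : ℝ) ≤ m := by positivity
                                 linarith
    obtain ⟨c, hc⟩ := hosc 0 k hk0
    have hc' : ∫⁻ y in closedBall 0 (k : ℝ), ENNReal.ofReal |f y - c| ∂μ ≤ ENNReal.ofReal K * T :=
      hc.trans (by gcongr; exact measure_mono (subset_univ _))
    have hcD : ENNReal.ofReal |c| ≤ D := by
      rw [ENNReal.le_div_iff_mul_le (Or.inl hm.ne')
        (Or.inl (measure_ne_top_of_subset (subset_univ _) hfin)), ← setLIntegral_const]
      calc ∫⁻ y in closedBall 0 (m : ℝ), ENNReal.ofReal |c| ∂μ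
          ≤ ∫⁻ y in closedBall 0 (m : ℝ), (ENNReal.ofReal |f y| + ENNReal.ofReal |f y - c|) ∂μ := by
            refine lintegral_mono fun y => ?_
            rw [← ENNReal.ofReal_add (abs_nonneg _) (abs_nonneg _)]
            refine ENNReal.ofReal_le_ofReal ?_
            have := abs_sub (f y) (f y - c)
            simpa using this
        _ = I0 + ∫⁻ y in closedBall 0 (m : ℝ), ENNReal.ofReal |f y - c| ∂μ := 
            lintegral_add_left (by fun_prop) _
        _ ≤ _ := by
            gcongr
            refine le_trans (lintegral_mono_set (closedBall_subset_closedBall ?_)) hc'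
            linarith
    calc ∫⁻ y in closedBall 0 (k : ℝ), ENNReal.ofReal |f y| ∂μ
          ≤ ∫⁻ y in closedBall 0 (k : ℝ), (ENNReal.ofReal |f y - c| + ENNReal.ofReal |c|) ∂μ := by
            refine lintegral_mono fun y => ?_
            rw [← ENNReal.ofReal_add (abs_nonneg _) (abs_nonneg _)]
            refine ENNReal.ofReal_le_ofReal ?_
            have := abs_add_le (f y - c) c
            simpa using this
      _ = ∫⁻ y in closedBall 0 (k : ℝ), ENNReal.ofReal |f y - c| ∂μ + 
            ENNReal.ofReal |c| * μ (closedBall 0 (k : ℝ)) := by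
            rw [lintegral_add_left (by fun_prop), setLIntegral_const]
      _ ≤ _ := by
            gcongr
            exact measure_mono (subset_univ _)
  rw [setLIntegral_univ] at key
  exact (key.trans_lt (by finiteness)).ne

lemma main_bound {n : ℕ} (μ : Measure (Fin n → ℝ)) [IsLocallyFiniteMeasure μ]
    (hplane : ∀ (j : Fin n) (t : ℝ), μ {x | x j = t} = 0)
    (f : (Fin n → ℝ) → ℝ) (hf : Measurable f)
    (hloc : ∀ (r : ℝ), 0 < r → IntegrableOn f (closedBall 0 r) μ) (K : ℝ)
    (hosc : ∀ (x : Fin n → ℝ) (r : ℝ), 0 < r → 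
      ∃ c : ℝ, ∫⁻ y in closedBall x r, ENNReal.ofReal |f y - c| ∂μ ≤
        ENNReal.ofReal K * μ (closedBall x r)) :
    ∃ C : ℝ≥0∞, C ≠ ⊤ ∧ ∀ l : ℝ, 0 ≤ l → μ {x | l < |f x|} < ⊤ →
      ∫⁻ x in {x | l < |f x|}, ENNReal.ofReal (|f x| - l) ∂μ ≤ C * μ {x | l < |f x|} := by
  obtain ⟨C, hC, h⟩ := big_case μ hplane f hf K hosc
  rcases eq_or_ne (μ univ) ⊤ with hT | hT
  · exact ⟨C, hC, fun l _ hl => h l (by rw [hT]; finiteness)⟩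
  rcases eq_or_ne (μ univ) 0 with h0 | h0
  · refine ⟨0, by simp, fun l _ _ => ?_⟩
    rw [Measure.measure_univ_eq_zero.1 h0]; simp
  have hA := fin_case μ f hf hloc K hosc hT
  set A := ∫⁻ x, ENNReal.ofReal |f x| ∂μ
  refine ⟨C + A / μ univ * 2, ?_, fun l hl0 hl => ?_⟩
  · have : A / μ univ ≠ ⊤ := ENNReal.div_ne_top hA h0
    finiteness
  · rcases lt_or_ge (2 * μ {x | l < |f x|}) (μ univ) with h1 | h1
    · exact (h l h1).trans (by gcongr; exact le_self_add)
    · calc _ ≤ ∫⁻ x in {x | l < |f x|}, ENNReal.ofReal |f x| ∂μ :=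
            lintegral_mono fun x => ENNReal.ofReal_le_ofReal (by linarith)
        _ ≤ A := setLIntegral_le_lintegral _ _
        _ = A / μ univ * μ univ := (ENNReal.div_mul_cancel h0 hT).symm
        _ ≤ A / μ univ * (2 * μ {x | l < |f x|}) := by gcongr
        _ = A / μ univ * 2 * μ {x | l < |f x|} := by rw [mul_assoc]
        _ ≤ _ := by gcongr; exact le_add_self

lemma rearr_antitone {X : Type*} [MeasurableSpace X] (μ : Measure X) (f : X → ℝ) :
    Antitone (rearr μ f) := by
  intro s t hst
  exact sInf_le_sInf fun l hl => le_trans hl (ENNReal.ofReal_le_ofReal hst)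

lemma rearr_le {X : Type*} [MeasurableSpace X] (μ : Measure X) (f : X → ℝ) {t l : ℝ}
    (hl : 0 ≤ l) (h : μ {x | l < |f x|} ≤ ENNReal.ofReal t) : rearr μ f t ≤ ENNReal.ofReal l := by
  refine sInf_le ?_
  simp only [mem_ofPred_eq]
  refine le_trans (measure_mono fun x hx => ?_) h
  exact (ENNReal.ofReal_lt_ofReal_iff_of_nonneg hl).1 hx

lemma distrib_le_of_rearr_lt {X : Type*} [MeasurableSpace X] (μ : Measure X) (f : X → ℝ) {t l : ℝ}
    (hl : 0 ≤ l) (h : rearr μ f t < ENNReal.ofReal l) : μ {x | l < |f x|} ≤ ENNReal.ofReal t := by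
  obtain ⟨v, hv, hvl⟩ := sInf_lt_iff.1 h
  refine le_trans (measure_mono fun x hx => ?_) hv
  exact hvl.trans ((ENNReal.ofReal_lt_ofReal_iff_of_nonneg hl).2 hx)

lemma rearr_ne_top {X : Type*} [MeasurableSpace X] (μ : Measure X) (f : X → ℝ) (hf : Measurable f)
    (l0 : ℝ) (h0 : μ {x | l0 < |f x|} < ⊤) {t : ℝ} (ht : 0 < t) : rearr μ f t ≠ ⊤ := by
  have hm : ∀ l : ℝ, MeasurableSet {x | l < |f x|} := fun l =>
    measurableSet_lt measurable_const hf.abs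
  have h1 : Tendsto (fun k : ℕ => μ {x | l0 + k < |f x|}) atTop
      (𝓝 (μ (⋂ k : ℕ, {x | l0 + k < |f x|}))) := by
    refine tendsto_measure_iInter_atTop (fun k => (hm _).nullMeasurableSet) ?_ ⟨0, ?_⟩
    · intro i j hij x hx
      have : (i : ℝ) ≤ j := by exact_mod_cast hij
      simp only [mem_ofPred_eq] at hx ⊢
      linarith
    · simpa using h0.ne
  have h2 : (⋂ k : ℕ, {x | l0 + k < |f x|}) = ∅ := by
    rw [eq_empty_iff_forall_notMem]
    intro x hx
    obtain ⟨k, hk⟩ := exists_nat_gt (|f x| - l0)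
    have := mem_iInter.1 hx k
    simp only [mem_ofPred_eq] at this
    linarith
  rw [h2, measure_empty] at h1
  have h3 := h1.eventually_lt_const (ENNReal.ofReal_pos.2 ht)
  obtain ⟨k, hk⟩ := h3.exists
  have h4 : rearr μ f t ≤ ENNReal.ofReal (max 0 (l0 + k)) := by
    refine rearr_le μ f (le_max_left _ _) (le_trans (measure_mono fun x hx => ?_) hk.le)
    simp only [mem_ofPred_eq] at hx ⊢
    exact (le_max_right _ _).trans_lt hx
  exact (h4.trans_lt ENNReal.ofReal_lt_top).ne

lemma lintegral_rearr_le {X : Type*} [MeasurableSpace X] (μ : Measure X) (f : X → ℝ)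
    (hf : Measurable f) (hfin : ∀ t : ℝ, 0 < t → rearr μ f t ≠ ⊤) {l : ℝ} (hl : 0 ≤ l) (t : ℝ) :
    ∫⁻ s in Ioc (0:ℝ) t, rearr μ f s ≤
      ENNReal.ofReal l * ENNReal.ofReal t + 
        ∫⁻ x in {x | l < |f x|}, ENNReal.ofReal (|f x| - l) ∂μ := by
  have hanti := rearr_antitone μ f
  have hEm : MeasurableSet {x | l < |f x|} := measurableSet_lt measurable_const hf.abs
  let g : ℝ → ℝ := fun s => max ((rearr μ f s).toReal - l) 0
  have hg0 : ∀ s, 0 ≤ g s := fun s => le_max_right _ _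
  have hgm : Measurable g :=
    ((hanti.measurable.ennreal_toReal).sub_const l).max measurable_const
  have h1 : ∫⁻ s in Ioc (0:ℝ) t, rearr μ f s ≤
      ∫⁻ s in Ioc (0:ℝ) t, (ENNReal.ofReal l + ENNReal.ofReal (g s)) := by
    refine setLIntegral_mono (by fun_prop) fun s hs => ?_
    have hg1 : (rearr μ f s).toReal - l ≤ g s := le_max_left _ _
    rw [← ENNReal.ofReal_add hl (hg0 s)]
    refine (ENNReal.ofReal_toReal (hfin s hs.1)).ge.trans (ENNReal.ofReal_le_ofReal ?_)
    linarith
  rw [lintegral_add_left measurable_const, setLIntegral_const, Real.volume_Ioc, sub_zero] at h1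
  refine h1.trans (add_le_add_right ?_ _)
  rw [lintegral_eq_lintegral_meas_lt _ (ae_of_all _ hg0) hgm.aemeasurable]
  have h2 : ∫⁻ x in {x | l < |f x|}, ENNReal.ofReal (|f x| - l) ∂μ =
      ∫⁻ x in {x | l < |f x|}, ENNReal.ofReal (max (|f x| - l) 0) ∂μ := by
    simp
  have hk0 : ∀ x, 0 ≤ max (|f x| - l) 0 := fun x => le_max_right _ _
  rw [h2, lintegral_eq_lintegral_meas_lt _ (ae_of_all _ hk0) (by fun_prop)]
  refine setLIntegral_mono' measurableSet_Ioi fun u hu => ?_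
  have hu : 0 < u := hu
  have h3 : (μ.restrict {x | l < |f x|}) {x | u < max (|f x| - l) 0} = μ {x | l + u < |f x|} := by
    rw [Measure.restrict_apply (measurableSet_lt measurable_const (by fun_prop))]
    congr 1
    ext x
    simp only [mem_inter_iff, mem_ofPred_eq, lt_max_iff]
    constructor
    · rintro ⟨h | h, h'⟩ <;> linarith
    · intro h
      exact ⟨Or.inl (by linarith), by linarith⟩
  rw [h3, Measure.restrict_apply (measurableSet_lt measurable_const hgm)]
  have h4 : {a | u < g a} ∩ Ioc 0 t ⊆ {s | 0 < s ∧ ENNReal.ofReal s < μ {x | l + u < |f x|}} := by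
    rintro s ⟨hs, hs0, hst⟩
    refine ⟨hs0, ?_⟩
    by_contra hcon
    have h5 := rearr_le μ f (by linarith) (not_lt.1 hcon)
    have h6 : (rearr μ f s).toReal ≤ l + u := ENNReal.toReal_le_of_le_ofReal (by linarith) h5
    simp only [g, mem_ofPred_eq, lt_max_iff] at hs
    rcases hs with h | h <;> linarith
  refine (measure_mono h4).trans ?_
  rcases eq_or_ne (μ {x | l + u < |f x|}) ⊤ with h | h
  · simp [h]
  · calc _ ≤ volume (Ioo 0 (μ {x | l + u < |f x|}).toReal) := by
          refine measure_mono fun s hs => ⟨hs.1, ?_⟩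
          exact (ENNReal.ofReal_lt_iff_lt_toReal hs.1.le h).1 hs.2
      _ = _ := by rw [Real.volume_Ioo, sub_zero, ENNReal.ofReal_toReal h]

end Helpers


/-- for a Radon measure `μ` on `ℝⁿ` giving no mass to hyperplanes orthogonal
to the coordinate axes, if `f ∈ BMO(μ)` and `d_{f,μ}(λ) < ∞` for all `λ > α`, then `f`
belongs to weak `L^∞(μ)`; in particular there is `M ≥ 0` with
`∫_{{|f| > λ}} |f| dμ ≤ (λ + M) d_{f,μ}(λ)` for all `λ > α`. -/
theorem stmt19 (n : ℕ) (μ : Measure (Fin n → ℝ)) [μ.Regular] [IsLocallyFiniteMeasure μ]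
    (hplane : ∀ (j : Fin n) (t : ℝ), μ {x | x j = t} = 0)
    (f : (Fin n → ℝ) → ℝ) (hf : Measurable f)
    (hloc : ∀ (a : Fin n → ℝ) (h : ℝ), 0 < h → IntegrableOn f (cube a h) μ)
    (K : ℝ)
    (hBMO : ∀ (a : Fin n → ℝ) (h : ℝ), 0 < h → 0 < μ (cube a h) →
      (⨍ y in cube a h, |f y - meanOn μ f (cube a h)| ∂μ) ≤ K)
    (α : ℝ) (hα : 0 ≤ α)
    (hdist : ∀ l : ℝ, α < l → distrib μ f l < ⊤) :
    (∀ t : ℝ, 0 < t → rearr μ f t ≠ ⊤) ∧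
    (∃ M' : ℝ, 0 ≤ M' ∧ ∀ t : ℝ, 0 < t →
      maxfn μ f t - rearr μ f t ≤ ENNReal.ofReal M') ∧
    (∃ M : ℝ, 0 ≤ M ∧ ∀ l : ℝ, α < l →
      ∫⁻ x in {x | l < |f x|}, ENNReal.ofReal |f x| ∂μ ≤
        ENNReal.ofReal (l + M) * distrib μ f l) := by
  have hosc : ∀ (x : Fin n → ℝ) (r : ℝ), 0 < r → 
      ∃ c : ℝ, ∫⁻ y in Metric.closedBall x r, ENNReal.ofReal |f y - c| ∂μ ≤
        ENNReal.ofReal K * μ (Metric.closedBall x r) := fun x r hr =>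
    osc_ball μ f hloc K hBMO x hr
  have hloc' : ∀ (r : ℝ), 0 < r → IntegrableOn f (Metric.closedBall 0 r) μ := fun r hr => by
    rw [closedBall_eq_cube 0 hr]
    exact hloc _ _ (by linarith)
  obtain ⟨C, hC, hmain⟩ := main_bound μ hplane f hf hloc' K hosc
  have hne : ∀ t : ℝ, 0 < t → rearr μ f t ≠ ⊤ := fun t ht =>
    rearr_ne_top μ f hf (α + 1) (hdist (α + 1) (by linarith)) ht
  refine ⟨hne, ⟨α + 1 + C.toReal, by positivity, fun t ht => ?_⟩,
    ⟨C.toReal, by positivity, fun l hl => ?_⟩⟩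
  · rw [tsub_le_iff_left]
    set F := rearr μ f t with hF
    have hFt : F ≠ ⊤ := hne t ht
    have hF0 : 0 ≤ F.toReal := ENNReal.toReal_nonneg
    set l := F.toReal + (α + 1) with hl
    have hl0 : 0 ≤ l := by positivity
    have hd : μ {x | l < |f x|} ≤ ENNReal.ofReal t := by
      refine distrib_le_of_rearr_lt μ f hl0 ?_
      rw [← hF, ENNReal.lt_ofReal_iff_toReal_lt hFt]
      linarith
    have h1 := lintegral_rearr_le μ f hf hne hl0 t
    have h2 := hmain l hl0 (hdist l (by linarith))
    have ht' : ENNReal.ofReal t ≠ 0 := (ENNReal.ofReal_pos.2 ht).ne'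
    rw [maxfn, ENNReal.div_le_iff ht' ENNReal.ofReal_ne_top]
    calc _ ≤ _ := h1
      _ ≤ ENNReal.ofReal l * ENNReal.ofReal t + C * ENNReal.ofReal t := by
        gcongr
        exact h2.trans (by gcongr)
      _ = (ENNReal.ofReal l + C) * ENNReal.ofReal t := by rw [add_mul]
      _ = _ := by
        rw [hl, ENNReal.ofReal_add hF0 (by linarith), ENNReal.ofReal_toReal hFt,
          ENNReal.ofReal_add (by linarith) ENNReal.toReal_nonneg, ENNReal.ofReal_toReal hC,
          add_assoc F]
  · have hl0 : 0 ≤ l := by linarith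
    have h2 := hmain l hl0 (hdist l hl)
    calc _ ≤ ∫⁻ x in {x | l < |f x|}, (ENNReal.ofReal l + ENNReal.ofReal (|f x| - l)) ∂μ := by
          refine lintegral_mono fun x => ?_
          refine le_trans (ENNReal.ofReal_le_ofReal ?_) ENNReal.ofReal_add_le
          linarith
      _ = ENNReal.ofReal l * μ {x | l < |f x|} +
          ∫⁻ x in {x | l < |f x|}, ENNReal.ofReal (|f x| - l) ∂μ := by
          rw [lintegral_add_left measurable_const, setLIntegral_const]
      _ ≤ ENNReal.ofReal l * μ {x | l < |f x|} + C * μ {x | l < |f x|} := by gcongr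
      _ = _ := by
          rw [ENNReal.ofReal_add hl0 ENNReal.toReal_nonneg, ENNReal.ofReal_toReal hC, add_mul,
            distrib]
end
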